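/- Let α > 0 and β ∈ ℝ, and consider the cubic polynomial p(z) = αz³ + βz − 1 over ℂ. Then p has no root with zero real part, and, counting roots with multiplicity, p has exactly one root with strictly positive real part and exactly two roots with strictly negative real part. Consequently, the polynomial q(z) = αz³ + βz + 1 has no root with zero real part, exactly two roots (with multiplicity) with strictly positive real part, and exactly one root with strictly negative real part. -/

import Mathlib

/-!
A cubic `P` over `ℝ` with positive leading coefficient and `P(0) < 0` has a root `t > 0`, and if its
coefficient of `z²` is nonnegative then the quadratic `P / (z - t)` has positive coefficients, so
both its roots lie in the open left half-plane. This applies to `p = αz³ + βz - 1`, and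
`q(z) = -p(-z)`, so the roots of `q` are the negatives of those of `p`.
-/

open Polynomial

/-- `HasRootInertia p m n` records the position of the roots of `p` relative to the imaginary axis:
none on it, `m` to its right and `n` to its left, counted with multiplicity. The first field
excludes `p = 0`, whose multiset `roots` is empty by convention. -/
structure HasRootInertia (p : ℂ[X]) (m n : ℕ) : Prop where
  re_ne_zero : ∀ z : ℂ, p.eval z = 0 → z.re ≠ 0
  card_re_pos : (p.roots.filter (fun z => 0 < z.re)).card = m
  card_re_neg : (p.roots.filter (fun z => z.re < 0)).card = n

namespace HasRootInertia

variable {p q : ℂ[X]} {m n m' n' : ℕ}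

theorem ne_zero (hp : HasRootInertia p m n) : p ≠ 0 := by
  rintro rfl
  exact hp.re_ne_zero 0 eval_zero Complex.zero_re

theorem mul (hp : HasRootInertia p m n) (hq : HasRootInertia q m' n') :
    HasRootInertia (p * q) (m + m') (n + n') where
  re_ne_zero z hz := by
    rw [eval_mul, mul_eq_zero] at hz
    exact hz.elim (hp.re_ne_zero z) (hq.re_ne_zero z)
  card_re_pos := by
    rw [roots_mul (mul_ne_zero hp.ne_zero hq.ne_zero), Multiset.filter_add, Multiset.card_add,
      hp.card_re_pos, hq.card_re_pos]
  card_re_neg := by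
    rw [roots_mul (mul_ne_zero hp.ne_zero hq.ne_zero), Multiset.filter_add, Multiset.card_add,
      hp.card_re_neg, hq.card_re_neg]

theorem neg (hp : HasRootInertia p m n) : HasRootInertia (-p) m n where
  re_ne_zero z hz := hp.re_ne_zero z (by simpa using hz)
  card_re_pos := by rw [roots_neg, hp.card_re_pos]
  card_re_neg := by rw [roots_neg, hp.card_re_neg]

theorem comp_neg_X (hp : HasRootInertia p m n) : HasRootInertia (p.comp (-X)) n m where
  re_ne_zero z hz := by
    simpa using hp.re_ne_zero (-z) (by simpa [eval_comp] using hz)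
  card_re_pos := by
    simpa [roots_comp_neg_X, Multiset.filter_map, Function.comp_def] using hp.card_re_neg
  card_re_neg := by
    simpa [roots_comp_neg_X, Multiset.filter_map, Function.comp_def] using hp.card_re_pos

theorem of_forall_re_pos (h : ∀ z : ℂ, p.eval z = 0 → 0 < z.re) :
    HasRootInertia p p.natDegree 0 where
  re_ne_zero z hz := (h z hz).ne'
  card_re_pos := by
    rw [Multiset.filter_eq_self.2 fun z hz => h z (isRoot_of_mem_roots hz),
      IsAlgClosed.card_roots_eq_natDegree]
  card_re_neg := by
    rw [Multiset.filter_eq_nil.2 fun z hz => (h z (isRoot_of_mem_roots hz)).not_gt,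
      Multiset.card_zero]

theorem of_forall_re_neg (h : ∀ z : ℂ, p.eval z = 0 → z.re < 0) :
    HasRootInertia p 0 p.natDegree where
  re_ne_zero z hz := (h z hz).ne
  card_re_pos := by
    rw [Multiset.filter_eq_nil.2 fun z hz => (h z (isRoot_of_mem_roots hz)).not_gt,
      Multiset.card_zero]
  card_re_neg := by
    rw [Multiset.filter_eq_self.2 fun z hz => h z (isRoot_of_mem_roots hz),
      IsAlgClosed.card_roots_eq_natDegree]

end HasRootInertia

theorem re_neg_of_quadratic_eq_zero {a b c : ℝ} (ha : 0 < a) (hb : 0 < b) (hc : 0 < c) {z : ℂ}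
    (hz : a * z ^ 2 + b * z + c = 0) : z.re < 0 := by
  have hre : a * (z.re ^ 2 - z.im ^ 2) + b * z.re + c = 0 := by
    simpa [pow_two] using congrArg Complex.re hz
  have him : a * (z.re * z.im + z.im * z.re) + b * z.im = 0 := by
    simpa [pow_two] using congrArg Complex.im hz
  by_contra! hpos
  have hfactor : z.im * (2 * a * z.re + b) = 0 := by linear_combination him
  have hreal : z.im = 0 := (mul_eq_zero.1 hfactor).resolve_right (by positivity)
  have : 0 < a * z.re ^ 2 + b * z.re + c := by positivity
  rw [hreal] at hre
  linarith

theorem hasRootInertia_quadratic {a b c : ℝ} (ha : 0 < a) (hb : 0 < b) (hc : 0 < c) :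
    HasRootInertia ((C a * X ^ 2 + C b * X + C c).map Complex.ofRealHom) 0 2 := by
  have hleft : ∀ z : ℂ, ((C a * X ^ 2 + C b * X + C c).map Complex.ofRealHom).eval z = 0 →
      z.re < 0 := fun z hz => re_neg_of_quadratic_eq_zero ha hb hc (by simpa using hz)
  simpa only [natDegree_map, natDegree_quadratic ha.ne'] using
    HasRootInertia.of_forall_re_neg hleft

theorem hasRootInertia_X_sub_C {w : ℂ} (hw : 0 < w.re) : HasRootInertia (X - C w) 1 0 := by
  have hright : ∀ z : ℂ, (X - C w).eval z = 0 → 0 < z.re := fun z hz => root_X_sub_C.1 hz ▸ hw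
  simpa only [natDegree_X_sub_C] using HasRootInertia.of_forall_re_pos hright

theorem cubic_eq_X_sub_C_mul_of_isRoot {R : Type*} [CommRing R] {P : Cubic R} {t : R}
    (ht : P.toPoly.IsRoot t) :
    P.toPoly = (X - C t) *
      (C P.a * X ^ 2 + C (P.a * t + P.b) * X + C (P.a * t ^ 2 + P.b * t + P.c)) := by
  have hC : C (P.a * t ^ 3 + P.b * t ^ 2 + P.c * t + P.d) = 0 := by
    simpa [Cubic.toPoly] using congrArg C ht.eq_zero
  simp only [Cubic.toPoly, C_add, C_mul, C_pow] at hC ⊢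
  linear_combination hC

theorem hasRootInertia_cubic {P : Cubic ℝ} (ha : 0 < P.a) (hb : 0 ≤ P.b) (hd : P.d < 0) :
    HasRootInertia (P.toPoly.map Complex.ofRealHom) 1 2 := by
  obtain ⟨t, hroot, ht⟩ : ∃ t, P.toPoly.IsRoot t ∧ 0 < t := by
    by_contra! hnonpos
    have heval : 0 ≤ P.toPoly.eval 0 :=
      zero_le_eval_of_roots_le_of_leadingCoeff_nonneg hnonpos
        (P.leadingCoeff_of_a_ne_zero ha.ne' ▸ ha.le)
    rw [← coeff_zero_eq_eval_zero, Cubic.coeff_eq_d] at heval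
    exact hd.not_ge heval
  have hlin : 0 < P.a * t + P.b := by positivity
  have hconst : 0 < P.a * t ^ 2 + P.b * t + P.c := by
    have : P.a * t ^ 3 + P.b * t ^ 2 + P.c * t + P.d = 0 := by
      simpa [Cubic.toPoly] using hroot.eq_zero
    have hmul : 0 < (P.a * t ^ 2 + P.b * t + P.c) * t := by linarith
    exact pos_of_mul_pos_left hmul ht.le
  rw [cubic_eq_X_sub_C_mul_of_isRoot hroot, Polynomial.map_mul, Polynomial.map_sub, map_X, map_C]
  exact (hasRootInertia_X_sub_C ht).mul (hasRootInertia_quadratic ha hlin hconst)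

/-- Root location for the cubic `αz³ + βz − 1` with `α > 0`, `β ∈ ℝ`: no root on the
imaginary axis, exactly one root (with multiplicity) with positive real part and two
with negative real part; the reflected cubic `αz³ + βz + 1` has the counts swapped. -/
theorem airy_cubic_root_location (a b : ℝ) (ha : 0 < a)
    (p q : Polynomial ℂ)
    (hp : p = C (a : ℂ) * X ^ 3 + C (b : ℂ) * X - 1)
    (hq : q = C (a : ℂ) * X ^ 3 + C (b : ℂ) * X + 1) :
    (∀ z : ℂ, p.eval z = 0 → z.re ≠ 0) ∧
    (p.roots.filter (fun z => 0 < z.re)).card = 1 ∧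
    (p.roots.filter (fun z => z.re < 0)).card = 2 ∧
    (∀ z : ℂ, q.eval z = 0 → z.re ≠ 0) ∧
    (q.roots.filter (fun z => 0 < z.re)).card = 2 ∧
    (q.roots.filter (fun z => z.re < 0)).card = 1 := by
  have hp_inertia : HasRootInertia p 1 2 := by
    have hcubic := hasRootInertia_cubic (P := ⟨a, 0, b, -1⟩) ha le_rfl neg_one_lt_zero
    simpa [hp, Cubic.toPoly, sub_eq_add_neg] using hcubic
  have hq_inertia : HasRootInertia q 2 1 := by
    have hqp : q = -p.comp (-X) := by
      simp only [hp, hq, sub_comp, add_comp, mul_comp, pow_comp, C_comp, X_comp, one_comp]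
      ring
    exact hqp ▸ hp_inertia.comp_neg_X.neg
  exact ⟨hp_inertia.re_ne_zero, hp_inertia.card_re_pos, hp_inertia.card_re_neg,
    hq_inertia.re_ne_zero, hq_inertia.card_re_pos, hq_inertia.card_re_neg⟩
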